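/- Let Φ = {log φ_n}_{n≥1} be a subadditive potential over (X,T) and β(Φ) := sup{χ(μ,Φ) : μ ∈ M(X,T)}. Then β(Φ) = limsup_{n→∞} (1/n)·sup_{x∈X} log φ_n(x) = sup_{x∈X} limsup_{n→∞} (1/n)·log φ_n(x). -/

import Mathlib

open MeasureTheory Filter Topology
open scoped ENNReal

/-- The empirical probability measure `γ_{n+1,x} = (1/(n+1)) ∑_{j≤n} δ_{T^j x}` of the orbit
of `x` (indexed so that it is a probability measure for every index). -/
noncomputable def empiricalPM {X : Type*} [MeasurableSpace X] (T : X → X) (x : X) (n : ℕ) :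
    MeasureTheory.ProbabilityMeasure X :=
  ⟨(n + 1 : ℝ≥0∞)⁻¹ • ∑ j ∈ Finset.range (n + 1), MeasureTheory.Measure.dirac (T^[j] x), by
    constructor
    rw [Measure.smul_apply, Measure.finset_sum_apply]
    simp
    rw [ENNReal.inv_mul_cancel] <;> simp⟩

/-- The set `V(x)` of weak* limit points of the sequence of empirical measures of `x`. -/
def limitSet {X : Type*} [MeasurableSpace X] [TopologicalSpace X] [OpensMeasurableSpace X]
    (T : X → X) (x : X) : Set (MeasureTheory.ProbabilityMeasure X) :=
  {μ | ∃ φ : ℕ → ℕ, StrictMono φ ∧ Tendsto (fun j => empiricalPM T x (φ j)) atTop (𝓝 μ)}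

/-- `μ` is an observable (physical-like) measure for `(X, T, Leb)`: every weak* neighbourhood
`U` of `μ` (equivalently, every ε-ball around `μ` in a compatible metric) is intersected by
`V(x)` for a positive `Leb`-measure set of points `x`. -/
def IsObservable {X : Type*} [MeasurableSpace X] [TopologicalSpace X] [OpensMeasurableSpace X]
    (Leb : MeasureTheory.Measure X) (T : X → X) (μ : MeasureTheory.ProbabilityMeasure X) : Prop :=
  ∀ U : Set (MeasureTheory.ProbabilityMeasure X), IsOpen U → μ ∈ U →
    0 < Leb {x | (limitSet T x ∩ U).Nonempty}

/-- The Lyapunov exponent `χ(μ, Φ) = lim_n (1/n) ∫ log φ_n dμ` of a potential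
`Φ = {log φ_n}` (for invariant `μ` the limit exists by subadditivity, so it equals the
`liminf` used here); it takes values in `[-∞, ∞)`, i.e. in `EReal`. -/
noncomputable def lyapExp {X : Type*} [MeasurableSpace X] (φ : ℕ → X → ℝ)
    (μ : MeasureTheory.Measure X) : EReal :=
  liminf (fun n : ℕ => (((n : ℝ)⁻¹ * ∫ x, Real.log (φ n x) ∂μ : ℝ) : EReal)) atTop

/-!
Write `f n = log φ_n`. If `c` is smaller than the growth rate of `sup f n`, then some point `x`
satisfies `n * c ≤ f n x` for all `n ≥ 1`: otherwise every point sees `f p - p * c < 0` at some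
time `p`, by compactness finitely many times `p` suffice, and cutting a long orbit into pieces of
these lengths bounds `f n - n * c` uniformly from above. Along the orbit of such an `x` the
subadditivity telescopes to a lower bound on the Birkhoff sums of each `f m`, so every weak limit
of the empirical measures is an invariant measure `μ` with `m * c ≤ ∫ f m ∂μ` for all `m ≥ 1`.
-/

section GrowthRates

variable {X : Type*} {T : X → X} {f : ℕ → X → ℝ}

/-- Subadditivity of a sequence of functions along the orbits of `T`, for `f n = log φ_n` the
defining inequality of a subadditive potential. As potentials are indexed by `n ≥ 1`, the function
`f 0` is left unconstrained. -/
def IsSubadditiveOver (T : X → X) (f : ℕ → X → ℝ) : Prop :=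
  ∀ m n, 1 ≤ m → 1 ≤ n → ∀ x, f (m + n) x ≤ f m x + f n (T^[m] x)

/-- The exponential growth rate `limsup_n (1/n) log φ_n(x)` of a potential along the orbit of a
point, in terms of `f n = log φ_n`. -/
noncomputable def growthRate (f : ℕ → X → ℝ) (x : X) : EReal :=
  limsup (fun n : ℕ => (((n : ℝ)⁻¹ * f n x : ℝ) : EReal)) atTop

/-- The exponential growth rate `limsup_n (1/n) sup_x log φ_n(x)` of the suprema of a potential, in
terms of `f n = log φ_n`. The supremum is taken in `EReal`, so that it is `⊤` rather than `0` for
an unbounded function. -/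
noncomputable def uniformGrowthRate (f : ℕ → X → ℝ) : EReal :=
  limsup (fun n : ℕ => (((n : ℝ)⁻¹ : ℝ) : EReal) * ⨆ x : X, (f n x : EReal)) atTop

theorem coe_inv_mul_le_coe_inv_mul_iSup (n : ℕ) (g : X → ℝ) {a : ℝ} {x : X} (ha : a ≤ g x) :
    (((n : ℝ)⁻¹ * a : ℝ) : EReal) ≤ (((n : ℝ)⁻¹ : ℝ) : EReal) * ⨆ y, (g y : EReal) := by
  rw [EReal.coe_mul]
  exact mul_le_mul_of_nonneg_left (le_iSup_of_le x (EReal.coe_le_coe_iff.2 ha))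
    (EReal.coe_nonneg.2 (by positivity))

theorem growthRate_le_uniformGrowthRate (f : ℕ → X → ℝ) (x : X) :
    growthRate f x ≤ uniformGrowthRate f :=
  limsup_le_limsup (.of_forall fun n => coe_inv_mul_le_coe_inv_mul_iSup n (f n) le_rfl)

theorem le_liminf_inv_mul_of_forall_mul_le {u : ℕ → ℝ} {c : ℝ}
    (h : ∀ n, 1 ≤ n → n * c ≤ u n) :
    (c : EReal) ≤ liminf (fun n : ℕ => (((n : ℝ)⁻¹ * u n : ℝ) : EReal)) atTop := by
  refine le_liminf_of_le (by isBoundedDefault) ?_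
  filter_upwards [eventually_ge_atTop 1] with n hn
  rw [EReal.coe_le_coe_iff, le_inv_mul_iff₀ (by positivity)]
  exact h n hn

theorem le_growthRate_of_forall_mul_le {c : ℝ} {x : X} (h : ∀ n, 1 ≤ n → n * c ≤ f n x) :
    (c : EReal) ≤ growthRate f x :=
  (le_liminf_inv_mul_of_forall_mul_le h).trans liminf_le_limsup

theorem coe_inv_mul_iSup_le {n : ℕ} (hn : 1 ≤ n) {g : X → ℝ} {b : ℝ} (h : ∀ x, g x ≤ n * b) :
    (((n : ℝ)⁻¹ : ℝ) : EReal) * ⨆ x, (g x : EReal) ≤ b := by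
  have hsup : ⨆ x, (g x : EReal) ≤ ((n * b : ℝ) : EReal) :=
    iSup_le fun x => EReal.coe_le_coe_iff.2 (h x)
  calc (((n : ℝ)⁻¹ : ℝ) : EReal) * ⨆ x, (g x : EReal)
      ≤ (((n : ℝ)⁻¹ : ℝ) : EReal) * ((n * b : ℝ) : EReal) :=
        mul_le_mul_of_nonneg_left hsup (EReal.coe_nonneg.2 (by positivity))
    _ = b := by rw [← EReal.coe_mul, inv_mul_cancel_left₀ (by positivity)]

theorem uniformGrowthRate_le_of_forall_le_mul_add {c C : ℝ}
    (h : ∀ n, 1 ≤ n → ∀ x, f n x ≤ n * c + C) : uniformGrowthRate f ≤ c := by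
  have hlim : Tendsto (fun n : ℕ => ((c + C / n : ℝ) : EReal)) atTop (𝓝 c) := by
    refine (continuous_coe_real_ereal.tendsto c).comp ?_
    simpa only [add_zero] using (tendsto_const_div_atTop_nhds_zero_nat C).const_add c
  rw [← hlim.limsup_eq]
  refine limsup_le_limsup ?_
  filter_upwards [eventually_ge_atTop 1] with n hn
  refine coe_inv_mul_iSup_le hn fun x => (h n hn x).trans_eq ?_
  field_simp

namespace IsSubadditiveOver

theorem sub_mul_const (hsub : IsSubadditiveOver T f) (c : ℝ) :
    IsSubadditiveOver T fun n x => f n x - n * c := by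
  intro m n hm hn x
  have := hsub m n hm hn x
  push_cast
  linarith

theorem log_of_le_mul {φ : ℕ → X → ℝ} (hpos : ∀ n, 1 ≤ n → ∀ x, 0 < φ n x)
    (hsub : ∀ m n, 1 ≤ m → 1 ≤ n → ∀ x, φ (m + n) x ≤ φ m x * φ n (T^[m] x)) :
    IsSubadditiveOver T fun n x => Real.log (φ n x) := by
  intro m n hm hn x
  rw [← Real.log_mul (hpos m hm x).ne' (hpos n hn _).ne']
  exact Real.log_le_log (hpos _ (by omega) x) (hsub m n hm hn x)

variable [TopologicalSpace X] [CompactSpace X]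

theorem exists_forall_le_of_forall_exists_neg (hsub : IsSubadditiveOver T f)
    (hf : ∀ n, 1 ≤ n → UpperSemicontinuous (f n)) (hneg : ∀ x, ∃ n, 1 ≤ n ∧ f n x < 0) :
    ∃ C : ℝ, ∀ n, 1 ≤ n → ∀ x, f n x ≤ C := by
  choose p hp hfp using hneg
  obtain ⟨t, ht⟩ := isCompact_univ.elim_finite_subcover (fun x => {y | f (p x) y < 0})
    (fun x => (hf _ (hp x)).isOpen_preimage 0) (fun x _ => Set.mem_iUnion.2 ⟨x, hfp x⟩)
  have hbdd : ∀ k, 1 ≤ k → ∃ B : ℝ, ∀ x, f k x ≤ B := fun k hk => by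
    obtain ⟨B, hB⟩ :=
      ((hf k hk).upperSemicontinuousOn Set.univ).bddAbove_of_isCompact isCompact_univ
    exact ⟨B, fun x => hB ⟨x, Set.mem_univ x, rfl⟩⟩
  choose! B hB using hbdd
  obtain ⟨C, hC⟩ := ((Finset.range (t.sup p + 1)).image B).exists_le
  refine ⟨C, fun n => ?_⟩
  induction n using Nat.strong_induction_on with
  | _ n ih =>
    intro hn x
    rcases le_or_gt n (t.sup p) with hshort | hlong
    · exact (hB n hn x).trans
        (hC _ (Finset.mem_image_of_mem B (Finset.mem_range.2 (Nat.lt_succ_of_le hshort))))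
    · obtain ⟨y, hyt, hy : f (p y) x < 0⟩ := Set.mem_iUnion₂.1 (ht (Set.mem_univ x))
      have hpn : p y < n := (Finset.le_sup hyt).trans_lt hlong
      have hpy := hp y
      calc f n x = f (p y + (n - p y)) x := by rw [Nat.add_sub_cancel' hpn.le]
        _ ≤ f (p y) x + f (n - p y) (T^[p y] x) := hsub _ _ hpy (by omega) x
        _ ≤ 0 + C := add_le_add hy.le (ih _ (by omega) (by omega) _)
        _ = C := zero_add C

theorem exists_forall_mul_le_of_lt_uniformGrowthRate (hsub : IsSubadditiveOver T f)
    (hf : ∀ n, 1 ≤ n → UpperSemicontinuous (f n)) {c : ℝ} (hc : c < uniformGrowthRate f) :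
    ∃ x, ∀ n, 1 ≤ n → n * c ≤ f n x := by
  by_contra! hneg
  have husc : ∀ n, 1 ≤ n → UpperSemicontinuous fun x => f n x - n * c := fun n hn => by
    simpa only [sub_eq_add_neg] using (hf n hn).add upperSemicontinuous_const
  obtain ⟨C, hC⟩ := (hsub.sub_mul_const c).exists_forall_le_of_forall_exists_neg husc
    (by simpa only [sub_neg] using hneg)
  exact hc.not_ge (uniformGrowthRate_le_of_forall_le_mul_add fun n hn x =>
    sub_le_iff_le_add'.1 (hC n hn x))

theorem uniformGrowthRate_eq_iSup_growthRate (hsub : IsSubadditiveOver T f)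
    (hf : ∀ n, 1 ≤ n → UpperSemicontinuous (f n)) :
    uniformGrowthRate f = ⨆ x, growthRate f x := by
  refine le_antisymm (EReal.ge_of_forall_gt_iff_ge.1 fun c hc => ?_)
    (iSup_le (growthRate_le_uniformGrowthRate f))
  obtain ⟨x, hx⟩ := hsub.exists_forall_mul_le_of_lt_uniformGrowthRate hf hc
  exact (le_growthRate_of_forall_mul_le hx).trans (le_iSup (growthRate f) x)

end IsSubadditiveOver

end GrowthRates

section EmpiricalMeasures

theorem birkhoffAverage_comp_self (R : Type*) {α M : Type*} [DivisionSemiring R]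
    [AddCommMonoid M] [Module R M] (T : α → α) (g : α → M) (n : ℕ) (x : α) :
    birkhoffAverage R T (g ∘ T) n x = birkhoffAverage R T g n (T x) := by
  simp only [birkhoffAverage, birkhoffSum, Function.comp_apply, ← Function.iterate_succ_apply',
    Function.iterate_succ_apply]

variable {X : Type*} [MeasurableSpace X] {T : X → X}

theorem integral_empiricalPM {E : Type*} [NormedAddCommGroup E] [NormedSpace ℝ E]
    [CompleteSpace E] (T : X → X) (x : X) (n : ℕ) {g : X → E} (hg : StronglyMeasurable g) :
    ∫ y, g y ∂(empiricalPM T x n : Measure X) = birkhoffAverage ℝ T g (n + 1) x := by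
  change ∫ y, g y ∂((n + 1 : ℝ≥0∞)⁻¹ • ∑ j ∈ Finset.range (n + 1), Measure.dirac (T^[j] x)) = _
  have hweight : ((n + 1 : ℝ≥0∞)⁻¹).toReal = ((n + 1 : ℕ) : ℝ)⁻¹ := by
    rw [ENNReal.toReal_inv]
    norm_cast
  rw [integral_smul_measure, hweight,
    integral_finsetSum_measure fun j _ => integrable_dirac' hg enorm_lt_top]
  simp only [integral_dirac' _ _ hg, birkhoffAverage, birkhoffSum]

variable [TopologicalSpace X]

theorem tendsto_birkhoffAverage_of_tendsto_empiricalPM [OpensMeasurableSpace X]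
    {μ : ProbabilityMeasure X} {l : Filter ℕ} {x : X}
    (hμ : Tendsto (empiricalPM T x) l (𝓝 μ)) (g : BoundedContinuousFunction X ℝ) :
    Tendsto (fun n => birkhoffAverage ℝ T g (n + 1) x) l (𝓝 (∫ y, g y ∂(μ : Measure X))) := by
  simpa only [integral_empiricalPM T x _ g.continuous.stronglyMeasurable] using
    ProbabilityMeasure.tendsto_iff_forall_integral_tendsto.1 hμ g

theorem map_eq_of_tendsto_empiricalPM [BorelSpace X] [HasOuterApproxClosed X]
    (hT : Continuous T) {μ : ProbabilityMeasure X} {l : Filter ℕ} [l.NeBot] (hl : l ≤ atTop)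
    {x : X} (hμ : Tendsto (empiricalPM T x) l (𝓝 μ)) :
    (μ : Measure X).map T = (μ : Measure X) := by
  have : IsProbabilityMeasure ((μ : Measure X).map T) :=
    Measure.isProbabilityMeasure_map hT.aemeasurable
  refine ext_of_forall_integral_eq_of_IsFiniteMeasure fun g => ?_
  rw [integral_map hT.aemeasurable g.continuous.aestronglyMeasurable]
  have hshift : Tendsto (fun n => birkhoffAverage ℝ T g (n + 1) (T x)) l
      (𝓝 (∫ y, g (T y) ∂(μ : Measure X))) := by
    simp only [← birkhoffAverage_comp_self]
    exact tendsto_birkhoffAverage_of_tendsto_empiricalPM hμ (g.compContinuous ⟨T, hT⟩)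
  have hdiff : Tendsto (fun n => birkhoffAverage ℝ T g (n + 1) (T x) -
      birkhoffAverage ℝ T g (n + 1) x) l (𝓝 0) :=
    ((tendsto_birkhoffAverage_apply_sub_birkhoffAverage' ℝ g.isBounded_range T x).comp
      (tendsto_add_atTop_nat 1)).mono_left hl
  exact sub_eq_zero.1 (tendsto_nhds_unique
    (hshift.sub (tendsto_birkhoffAverage_of_tendsto_empiricalPM hμ g)) hdiff)

end EmpiricalMeasures

section InvariantMeasures

variable {X : Type*} {T : X → X}

-- Subadditivity is available from time `1` on, which is why the Birkhoff sums start at `T x`.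
theorem IsSubadditiveOver.neg_sum_le_birkhoffSum {f : ℕ → X → ℝ} (hsub : IsSubadditiveOver T f)
    {x : X} (hx : ∀ n, 1 ≤ n → 0 ≤ f n x) {m : ℕ} (hm : 1 ≤ m) (N : ℕ) :
    -∑ j ∈ Finset.range m, f (j + 1) x ≤ birkhoffSum T (f m) N (T x) := by
  have hmono : ∑ j ∈ Finset.range N, f (j + 1) x ≤ ∑ j ∈ Finset.range (m + N), f (j + 1) x :=
    Finset.sum_le_sum_of_subset_of_nonneg (Finset.range_mono (Nat.le_add_left N m))
      fun j _ _ => hx (j + 1) (Nat.le_add_left 1 j)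
  have hstep : ∀ j, f (m + j + 1) x ≤ f (j + 1) x + f m (T^[j] (T x)) := fun j => by
    rw [show m + j + 1 = j + 1 + m by ring]
    exact hsub (j + 1) m (Nat.le_add_left 1 j) hm x
  have hshift : ∑ j ∈ Finset.range (m + N), f (j + 1) x ≤ ∑ j ∈ Finset.range m, f (j + 1) x +
      (∑ j ∈ Finset.range N, f (j + 1) x + birkhoffSum T (f m) N (T x)) := by
    rw [Finset.sum_range_add, birkhoffSum, ← Finset.sum_add_distrib]
    gcongr with j
    exact hstep j
  linarith

variable [TopologicalSpace X] [CompactSpace X] [MeasurableSpace X]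

theorem IsSubadditiveOver.integral_nonneg_of_tendsto_empiricalPM [OpensMeasurableSpace X]
    {f : ℕ → X → ℝ} (hsub : IsSubadditiveOver T f) {x : X} (hx : ∀ n, 1 ≤ n → 0 ≤ f n x)
    {μ : ProbabilityMeasure X} {l : Filter ℕ} [l.NeBot] (hl : l ≤ atTop)
    (hμ : Tendsto (empiricalPM T (T x)) l (𝓝 μ)) {m : ℕ} (hm : 1 ≤ m) (hf : Continuous (f m)) :
    0 ≤ ∫ y, f m y ∂(μ : Measure X) := by
  have hlow : Tendsto (fun n : ℕ => ((n + 1 : ℕ) : ℝ)⁻¹ * -∑ j ∈ Finset.range m, f (j + 1) x)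
      l (𝓝 0) := by
    simpa only [zero_mul, Function.comp_def] using
      (((tendsto_inv_atTop_nhds_zero_nat (𝕜 := ℝ)).comp (tendsto_add_atTop_nat 1)).mono_left
        hl).mul_const (-∑ j ∈ Finset.range m, f (j + 1) x)
  refine le_of_tendsto_of_tendsto' hlow (tendsto_birkhoffAverage_of_tendsto_empiricalPM hμ
    (BoundedContinuousFunction.mkOfCompact ⟨f m, hf⟩)) fun n => ?_
  exact mul_le_mul_of_nonneg_left (hsub.neg_sum_le_birkhoffSum hx hm (n + 1)) (by positivity)

theorem IsSubadditiveOver.exists_invariant_forall_mul_le_integral [T2Space X]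
    [HasOuterApproxClosed X] [BorelSpace X] {f : ℕ → X → ℝ} (hsub : IsSubadditiveOver T f)
    (hT : Continuous T) (hf : ∀ n, 1 ≤ n → Continuous (f n)) {c : ℝ} {x : X}
    (hx : ∀ n, 1 ≤ n → n * c ≤ f n x) :
    ∃ μ : ProbabilityMeasure X, (μ : Measure X).map T = (μ : Measure X) ∧
      ∀ n, 1 ≤ n → n * c ≤ ∫ y, f n y ∂(μ : Measure X) := by
  obtain ⟨μ, hcluster⟩ := exists_clusterPt_of_compactSpace (map (empiricalPM T (T x)) atTop)
  obtain ⟨U, hU, hμ⟩ := mapClusterPt_iff_ultrafilter.1 hcluster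
  refine ⟨μ, map_eq_of_tendsto_empiricalPM hT hU hμ, fun n hn => ?_⟩
  have hnonneg : 0 ≤ ∫ y, (f n y - n * c) ∂(μ : Measure X) :=
    (hsub.sub_mul_const c).integral_nonneg_of_tendsto_empiricalPM
      (fun k hk => sub_nonneg.2 (hx k hk)) hU hμ hn ((hf n hn).sub continuous_const)
  rw [integral_sub ((hf n hn).integrable_of_hasCompactSupport (.of_compactSpace _))
    (integrable_const _), integral_const, probReal_univ, one_smul] at hnonneg
  exact sub_nonneg.1 hnonneg

end InvariantMeasures

section LyapunovExponents

variable {X : Type*} [MeasurableSpace X] {φ : ℕ → X → ℝ}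

theorem lyapExp_le_uniformGrowthRate {μ : Measure X} [IsProbabilityMeasure μ]
    (hint : ∀ n, 1 ≤ n → Integrable (fun x => Real.log (φ n x)) μ) :
    lyapExp φ μ ≤ uniformGrowthRate fun n x => Real.log (φ n x) := by
  refine le_trans liminf_le_limsup (limsup_le_limsup ?_)
  filter_upwards [eventually_ge_atTop 1] with n hn
  obtain ⟨x, hx⟩ := exists_integral_le (hint n hn)
  exact coe_inv_mul_le_coe_inv_mul_iSup n (fun x => Real.log (φ n x)) hx

theorem sSup_lyapExp_eq_uniformGrowthRate [TopologicalSpace X] [CompactSpace X] [T2Space X]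
    [HasOuterApproxClosed X] [BorelSpace X] {T : X → X} (hT : Continuous T)
    (hlog : ∀ n, 1 ≤ n → Continuous fun x => Real.log (φ n x))
    (hsub : IsSubadditiveOver T fun n x => Real.log (φ n x)) :
    sSup {c : EReal | ∃ ν : ProbabilityMeasure X,
          (ν : Measure X).map T = (ν : Measure X) ∧ c = lyapExp φ (ν : Measure X)} =
        uniformGrowthRate fun n x => Real.log (φ n x) := by
  refine le_antisymm (sSup_le ?_) (EReal.ge_of_forall_gt_iff_ge.1 fun c hc => ?_)
  · rintro _ ⟨ν, -, rfl⟩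
    exact lyapExp_le_uniformGrowthRate fun n hn =>
      (hlog n hn).integrable_of_hasCompactSupport (.of_compactSpace _)
  · obtain ⟨x, hx⟩ := hsub.exists_forall_mul_le_of_lt_uniformGrowthRate
      (fun n hn => (hlog n hn).upperSemicontinuous) hc
    obtain ⟨ν, hν, hνc⟩ := hsub.exists_invariant_forall_mul_le_integral hT hlog hx
    exact (le_liminf_inv_mul_of_forall_mul_le hνc).trans (le_sSup ⟨ν, hν, rfl⟩)

end LyapunovExponents

theorem maximal_lyapunov_exponent_formula_general
    {X : Type*} [TopologicalSpace X] [CompactSpace X] [T2Space X] [HasOuterApproxClosed X]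
    [MeasurableSpace X] [BorelSpace X]
    {T : X → X} (hT : Continuous T)
    {φ : ℕ → X → ℝ}
    (hcont : ∀ n, 1 ≤ n → Continuous (φ n))
    (hpos : ∀ n, 1 ≤ n → ∀ x, 0 < φ n x)
    (hsub : ∀ m n, 1 ≤ m → 1 ≤ n → ∀ x, φ (m + n) x ≤ φ m x * φ n (T^[m] x)) :
    sSup {c : EReal | ∃ ν : ProbabilityMeasure X,
          (ν : Measure X).map T = (ν : Measure X) ∧ c = lyapExp φ (ν : Measure X)} =
        limsup (fun n : ℕ =>
          (((n : ℝ)⁻¹ : ℝ) : EReal) * ⨆ x : X, (Real.log (φ n x) : EReal)) atTop ∧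
      sSup {c : EReal | ∃ ν : ProbabilityMeasure X,
          (ν : Measure X).map T = (ν : Measure X) ∧ c = lyapExp φ (ν : Measure X)} =
        ⨆ x : X, limsup (fun n : ℕ =>
          (((n : ℝ)⁻¹ * Real.log (φ n x) : ℝ) : EReal)) atTop := by
  have hlog : ∀ n, 1 ≤ n → Continuous fun x => Real.log (φ n x) := fun n hn =>
    (hcont n hn).log fun x => (hpos n hn x).ne'
  have hlogsub : IsSubadditiveOver T fun n x => Real.log (φ n x) := .log_of_le_mul hpos hsub
  have hmeasure := sSup_lyapExp_eq_uniformGrowthRate hT hlog hlogsub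
  exact ⟨hmeasure, hmeasure.trans (hlogsub.uniformGrowthRate_eq_iSup_growthRate fun n hn =>
    (hlog n hn).upperSemicontinuous)⟩

/-- **Formula (4.2).** For a subadditive potential `Φ = {log φ_n}` over a continuous map `T`
of a compact metric space `X`, the maximal Lyapunov exponent
`β(Φ) = sup {χ(μ,Φ) : μ ∈ M(X,T)}` satisfies
`β(Φ) = limsup_n (1/n) sup_x log φ_n(x) = sup_x limsup_n (1/n) log φ_n(x)`. -/
theorem maximal_lyapunov_exponent_formula
    {X : Type*} [MetricSpace X] [CompactSpace X] [Nonempty X]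
    [MeasurableSpace X] [BorelSpace X]
    (T : X → X) (hT : Continuous T)
    (φ : ℕ → X → ℝ)
    (hcont : ∀ n, 1 ≤ n → Continuous (φ n))
    (hpos : ∀ n, 1 ≤ n → ∀ x, 0 < φ n x)
    (hsub : ∀ m n, 1 ≤ m → 1 ≤ n → ∀ x, φ (m + n) x ≤ φ m x * φ n (T^[m] x)) :
    sSup {c : EReal | ∃ ν : ProbabilityMeasure X,
          (ν : Measure X).map T = (ν : Measure X) ∧ c = lyapExp φ (ν : Measure X)} =
        limsup (fun n : ℕ =>
          (((n : ℝ)⁻¹ : ℝ) : EReal) * ⨆ x : X, (Real.log (φ n x) : EReal)) atTop ∧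
      sSup {c : EReal | ∃ ν : ProbabilityMeasure X,
          (ν : Measure X).map T = (ν : Measure X) ∧ c = lyapExp φ (ν : Measure X)} =
        ⨆ x : X, limsup (fun n : ℕ =>
          (((n : ℝ)⁻¹ * Real.log (φ n x) : ℝ) : EReal)) atTop :=
  maximal_lyapunov_exponent_formula_general hT hcont hpos hsub
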